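/- Every minor of the graph G(δ,k) has edge density strictly less than δ + 2; that is, the minor density satisfies δ(G(δ,k)) < δ + 2. -/

import Mathlib

open SimpleGraph

/-- Vertex type of the lower-bound graph `G(δ,k)`: the top path has `(δ-1)k+1` vertices
`p`, and there is a `((δ-1)D+1) × ((δ-1)D+1)` grid of vertices `v_{i,j}`, where `D = kδ`. -/
abbrev GDKVert (δ k : ℕ) : Type :=
  Fin ((δ - 1) * k + 1) ⊕ (Fin ((δ - 1) * (k * δ) + 1) × Fin ((δ - 1) * (k * δ) + 1))

/-- The lower-bound graph `G(δ,k)` (indices zero-based, `D = kδ`): the `p`-vertices form a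
path (the top path); each row `v_{i,·}` forms a path; each column `v_{·,c}` with `D ∣ c`
forms a path; and `v_{r,c}` is adjacent to `p_q` whenever `D ∣ r`, `D ∣ c` and
`q·D = c·k` (i.e. `q = (c/D)·k`). -/
def GDK (δ k : ℕ) : SimpleGraph (GDKVert δ k) :=
  SimpleGraph.fromRel (fun x y =>
    match x, y with
    | Sum.inl a, Sum.inl b => (b : ℕ) = (a : ℕ) + 1
    | Sum.inr ⟨i, j⟩, Sum.inr ⟨i', j'⟩ =>
        (i = i' ∧ (j' : ℕ) = (j : ℕ) + 1) ∨
        (j = j' ∧ (k * δ) ∣ (j : ℕ) ∧ (i' : ℕ) = (i : ℕ) + 1)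
    | Sum.inr ⟨i, j⟩, Sum.inl p =>
        (k * δ) ∣ (i : ℕ) ∧ (k * δ) ∣ (j : ℕ) ∧ (p : ℕ) * (k * δ) = (j : ℕ) * k
    | Sum.inl _, Sum.inr _ => False)

/-- `H` is a minor of `G`. -/
def IsMinor {V W : Type} (G : SimpleGraph V) (H : SimpleGraph W) : Prop :=
  ∃ f : W → Set V,
    (∀ w, (f w).Nonempty) ∧
    (∀ w, (G.induce (f w)).Connected) ∧
    (Pairwise fun w₁ w₂ => Disjoint (f w₁) (f w₂)) ∧
    (∀ w₁ w₂, H.Adj w₁ w₂ → ∃ u ∈ f w₁, ∃ v ∈ f w₂, G.Adj u v)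

/-- The minor density `δ(G)`: the supremum of `|E'| / |V'|` over all minors `H = (V', E')`
of `G`. -/
noncomputable def minorDensity {V : Type} [Fintype V] (G : SimpleGraph V) : ℝ :=
  sSup {d : ℝ | ∃ (W : Type) (_ : Fintype W) (H : SimpleGraph W),
    IsMinor G H ∧ d = (Nat.card H.edgeSet : ℝ) / (Nat.card W : ℝ)}


lemma zmod2_ne_zero {x : ZMod 2} (h : x ≠ 0) : x = 1 := by
  revert h; revert x; decide

lemma zmod2_double (x : ZMod 2) : x + x = 0 := by
  revert x; decide

open Classical in
/-- A nonzero cycle in a simple graph has at least three edges. -/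
lemma cycle_card {W ED : Type*} [Fintype ED] (a b : ED → W) (hab : ∀ e, a e ≠ b e)
    (inj : ∀ e e', s(a e, b e) = s(a e', b e') → e = e') (y : ED → ZMod 2)
    (hy : ∀ w, ∑ e, y e * ((if a e = w then 1 else 0) + (if b e = w then 1 else 0)) = 0)
    (h0 : y ≠ 0) : 3 ≤ (Finset.univ.filter (fun e => y e ≠ 0)).card := by
  obtain ⟨e0, he0⟩ : ∃ e, y e ≠ 0 := by
    by_contra! h; exact h0 (funext h)
  have key : ∀ w, (a e0 = w ∨ b e0 = w) → ∃ e1, e1 ≠ e0 ∧ y e1 ≠ 0 ∧ (a e1 = w ∨ b e1 = w) := by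
    intro w hw
    by_contra! hcon
    have h1 := hy w
    rw [Finset.sum_eq_single e0] at h1
    · have := hab e0
      rw [zmod2_ne_zero he0] at h1
      rcases hw with hw | hw
      · have h2 : b e0 ≠ w := fun h => this (hw.trans h.symm)
        simp [hw, h2] at h1
      · have h2 : a e0 ≠ w := fun h => this (h.trans hw.symm)
        simp [hw, h2] at h1
    · intro e _ hne
      by_cases hz : y e = 0
      · simp [hz]
      · have := hcon e hne hz
        simp [this.1, this.2]
    · simp
  obtain ⟨e1, h1, h1y, h1w⟩ := key _ (Or.inl rfl)
  obtain ⟨e2, h2, h2y, h2w⟩ := key _ (Or.inr rfl)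
  have h12 : e1 ≠ e2 := by
    rintro rfl
    apply h1
    apply inj
    have := hab e0
    have := hab e1
    rw [Sym2.eq_iff]
    grind
  have : ({e0, e1, e2} : Finset ED) ⊆ Finset.univ.filter (fun e => y e ≠ 0) := by
    intro e he
    simp only [Finset.mem_insert, Finset.mem_singleton] at he
    rcases he with rfl | rfl | rfl <;> simp [*]
  calc 3 = ({e0, e1, e2} : Finset ED).card := by
        rw [Finset.card_eq_three.2 ⟨e0, e1, e2, h1.symm, h2.symm, h12, rfl⟩]
    _ ≤ _ := Finset.card_le_card this

open Classical in
theorem maclane_count {V E F W ED : Type*} [Fintype W] [Fintype ED]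
    (s t : E → V) (inc : V → Finset E) (mem_inc : ∀ v g, g ∈ inc v ↔ s g = v ∨ t g = v)
    (hne : ∀ g, s g ≠ t g) (l r : E → F)
    (face : ∀ (x : F → ZMod 2) (v : V), ∑ g ∈ inc v, (x (l g) + x (r g)) = 0)
    (span : ∀ z : E → ZMod 2, (∀ v, ∑ g ∈ inc v, z g = 0) →
      ∃ x : F → ZMod 2, ∀ g, z g = x (l g) + x (r g))
    (f : W → Finset V) (hf : ∀ w, (f w).Nonempty)
    (disj : ∀ w w' v, v ∈ f w → v ∈ f w' → w = w')
    (conn : ∀ w, ∀ u ∈ f w, ∀ v ∈ f w, ∃ P : E → ZMod 2,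
      (∀ g, P g ≠ 0 → s g ∈ f w ∧ t g ∈ f w) ∧
      ∀ x, ∑ g ∈ inc x, P g = (if x = u then 1 else 0) + (if x = v then 1 else 0))
    (a b : ED → W) (hab : ∀ e, a e ≠ b e)
    (inj : ∀ e e', s(a e, b e) = s(a e', b e') → e = e')
    (rep : ED → E) (hs : ∀ e, s (rep e) ∈ f (a e)) (ht : ∀ e, t (rep e) ∈ f (b e)) :
    Fintype.card ED ≤ 3 * Fintype.card W := by
  have repinj : Function.Injective rep := by
    intro e e' h
    apply inj
    rw [disj _ _ _ (hs e) (h ▸ hs e'), disj _ _ _ (ht e) (h ▸ ht e')]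
  let D : (ED → ZMod 2) →ₗ[ZMod 2] (W → ZMod 2) :=
    { toFun := fun y w => ∑ e, y e * ((if a e = w then 1 else 0) + (if b e = w then 1 else 0))
      map_add' := by
        intro y z; funext w; simp only [Pi.add_apply, ← Finset.sum_add_distrib, add_mul]
      map_smul' := by
        intro c y; funext w
        simp only [Pi.smul_apply, smul_eq_mul, RingHom.id_apply, Finset.mul_sum, mul_assoc] }
  have memZ : ∀ y, y ∈ LinearMap.ker D ↔ ∀ w, ∑ e, y e *
      ((if a e = w then 1 else 0) + (if b e = w then 1 else 0)) = 0 := by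
    intro y
    rw [LinearMap.mem_ker]
    exact funext_iff
  have hrank : Fintype.card ED ≤ Fintype.card W + Module.finrank (ZMod 2) (LinearMap.ker D) := by
    have h1 := LinearMap.finrank_range_add_finrank_ker D
    have h2 := Submodule.finrank_le (LinearMap.range D)
    rw [Module.finrank_fintype_fun_eq_card] at h1 h2
    omega
  -- face classes
  let inner : E → Prop := fun g => ∃ w, s g ∈ f w ∧ t g ∈ f w
  let M : E → Prop := fun g => inner g ∨ g ∈ Set.range rep
  have rep_not_inner : ∀ e, ¬ inner (rep e) := by
    rintro e ⟨w, h1, h2⟩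
    exact hab e ((disj _ _ _ (hs e) h1).trans (disj _ _ _ (ht e) h2).symm)
  let R : F → F → Prop := fun x y => ∃ g, ¬ M g ∧ x = l g ∧ y = r g
  let q : F → Quot R := Quot.mk R
  have hq : ∀ g, ¬ M g → q (l g) = q (r g) := fun g hg => Quot.sound ⟨g, hg, rfl, rfl⟩
  let β : Quot R → E → ZMod 2 := fun K g =>
    (if q (l g) = K then 1 else 0) + (if q (r g) = K then 1 else 0)
  let bb : Quot R → ED → ZMod 2 := fun K e => β K (rep e)
  let KS : Finset (Quot R) :=
    Finset.univ.image (fun e => q (l (rep e))) ∪ Finset.univ.image (fun e => q (r (rep e)))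
  let N : Finset (Quot R) := KS.filter (fun K => bb K ≠ 0)
  -- each class is a cycle
  have hcyc : ∀ K w, ∑ e, bb K e *
      ((if a e = w then 1 else 0) + (if b e = w then 1 else 0)) = 0 := by
    intro K w
    have h1 : ∑ v ∈ f w, ∑ g ∈ inc v, β K g = 0 := by
      apply Finset.sum_eq_zero
      intro v _
      exact face (fun x => if q x = K then 1 else 0) v
    let U : Finset E := (f w).biUnion inc ∪ Finset.univ.image rep
    have h2 : ∀ v ∈ f w, ∑ g ∈ inc v, β K g
        = ∑ g ∈ U, β K g * ((if s g = v then 1 else 0) + (if t g = v then 1 else 0)) := by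
      intro v hv
      have hsub : inc v ⊆ U := fun g hg =>
        Finset.mem_union_left _ (Finset.mem_biUnion.2 ⟨v, hv, hg⟩)
      rw [← Finset.sum_subset hsub]
      · apply Finset.sum_congr rfl
        intro g hg
        have := hne g
        rcases (mem_inc v g).1 hg with h | h
        · have h' : t g ≠ v := fun h2 => this (h.trans h2.symm)
          simp [h, h']
        · have h' : s g ≠ v := fun h2 => this (h2.trans h.symm)
          simp [h, h']
      · intro g _ hg
        rw [mem_inc] at hg
        push Not at hg
        simp [hg.1, hg.2]
    rw [Finset.sum_congr rfl h2, Finset.sum_comm] at h1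
    have h3 : ∀ g ∈ U, ∑ v ∈ f w, β K g * ((if s g = v then 1 else 0) + (if t g = v then 1 else 0))
        = β K g * ((if s g ∈ f w then 1 else 0) + (if t g ∈ f w then 1 else 0)) := by
      intro g _
      rw [← Finset.mul_sum, Finset.sum_add_distrib, Finset.sum_ite_eq, Finset.sum_ite_eq]
    rw [Finset.sum_congr rfl h3] at h1
    refine Eq.trans ?_ h1
    have hsub : Finset.univ.image rep ⊆ U := Finset.subset_union_right
    rw [← Finset.sum_subset hsub]
    · rw [Finset.sum_image (fun _ _ _ _ h => repinj h)]
      apply Finset.sum_congr rfl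
      intro e _
      have e1 : (a e = w) ↔ s (rep e) ∈ f w :=
        ⟨fun h => h ▸ hs e, fun h => disj _ _ _ (hs e) h⟩
      have e2 : (b e = w) ↔ t (rep e) ∈ f w :=
        ⟨fun h => h ▸ ht e, fun h => disj _ _ _ (ht e) h⟩
      simp only [e1, e2, bb]
    · intro g _ hg
      have hg' : g ∉ Set.range rep := by
        rintro ⟨e, rfl⟩; exact hg (Finset.mem_image_of_mem _ (Finset.mem_univ _))
      by_cases hM : M g
      · rcases hM with ⟨w', k1, k2⟩ | h
        · by_cases hw : w' = w
          · subst hw; simp only [k1, k2, if_true, zmod2_double, mul_zero]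
          · have n1 : s g ∉ f w := fun h => hw (disj _ _ _ k1 h)
            have n2 : t g ∉ f w := fun h => hw (disj _ _ _ k2 h)
            simp [n1, n2]
        · exact absurd h hg'
      · have : β K g = 0 := by
          simp only [β, hq g hM, zmod2_double]
        rw [this, zero_mul]
  -- spanning
  have hspan : LinearMap.ker D ≤ Submodule.span (ZMod 2) (N.image bb : Set (ED → ZMod 2)) := by
    intro y hy
    rw [memZ] at hy
    choose ρ hρ using hf
    choose P hP1 hP2 using conn
    let z : E → ZMod 2 := fun g => ∑ e, y e * ((if g = rep e then 1 else 0) +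
      P (a e) _ (hs e) _ (hρ (a e)) g + P (b e) _ (ht e) _ (hρ (b e)) g)
    have Pinner : ∀ w u hu v hv g, ¬ inner g → P w u hu v hv g = 0 := by
      intro w u hu v hv g hg
      by_contra h
      exact hg ⟨w, hP1 w u hu v hv g h⟩
    have hz : ∀ v, ∑ g ∈ inc v, z g = 0 := by
      intro v
      simp only [z]
      rw [Finset.sum_comm]
      have h1 : ∀ e : ED, ∑ g ∈ inc v, y e * ((if g = rep e then 1 else 0) +
          P (a e) _ (hs e) _ (hρ (a e)) g + P (b e) _ (ht e) _ (hρ (b e)) g)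
          = y e * ((if v = ρ (a e) then 1 else 0) + (if v = ρ (b e) then 1 else 0)) := by
        intro e
        rw [← Finset.mul_sum, Finset.sum_add_distrib, Finset.sum_add_distrib, hP2, hP2]
        congr 1
        have h2 : (∑ g ∈ inc v, if g = rep e then (1 : ZMod 2) else 0)
            = (if v = s (rep e) then 1 else 0) + (if v = t (rep e) then 1 else 0) := by
          rw [Finset.sum_ite_eq']
          have := hne (rep e)
          by_cases c1 : v = s (rep e)
          · have c2 : v ≠ t (rep e) := fun h => this (c1.symm.trans h)
            rw [if_pos ((mem_inc _ _).2 (Or.inl c1.symm)), if_pos c1, if_neg c2, add_zero]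
          · by_cases c2 : v = t (rep e)
            · rw [if_pos ((mem_inc _ _).2 (Or.inr c2.symm)), if_neg c1, if_pos c2, zero_add]
            · rw [if_neg, if_neg c1, if_neg c2, zero_add]
              rw [mem_inc]; rintro (h | h)
              · exact c1 h.symm
              · exact c2 h.symm
        rw [h2]
        generalize (if v = s (rep e) then (1 : ZMod 2) else 0) = A
        generalize (if v = t (rep e) then (1 : ZMod 2) else 0) = B
        generalize (if v = ρ (a e) then (1 : ZMod 2) else 0) = C
        generalize (if v = ρ (b e) then (1 : ZMod 2) else 0) = C'
        revert A B C C'; decide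
      rw [Finset.sum_congr rfl (fun e _ => h1 e)]
      by_cases hv : ∃ w, v = ρ w
      · obtain ⟨w, rfl⟩ := hv
        refine Eq.trans ?_ (hy w)
        apply Finset.sum_congr rfl
        intro e _
        have : ∀ w', (ρ w = ρ w') ↔ (w' = w) := fun w' =>
          ⟨fun h => disj _ _ _ (hρ w') (h ▸ hρ w), fun h => by rw [h]⟩
        simp only [this]
      · push Not at hv
        simp [hv]
    obtain ⟨x, hx⟩ := span z hz
    have hxR : ∀ u v, R u v → x u = x v := by
      rintro u v ⟨g, hg, rfl, rfl⟩
      have h0 : z g = 0 := by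
        apply Finset.sum_eq_zero
        intro e _
        rw [Pinner _ _ _ _ _ g (fun h => hg (Or.inl h)),
          Pinner _ _ _ _ _ g (fun h => hg (Or.inl h)),
          if_neg (fun h => hg (Or.inr ⟨e, h.symm⟩))]
        simp
      rw [hx g] at h0
      revert h0
      generalize x (l g) = A
      generalize x (r g) = B
      revert A B; decide
    let X : Quot R → ZMod 2 := Quot.lift x hxR
    have hX : ∀ u, X (q u) = x u := fun _ => rfl
    have hyz : ∀ e, y e = z (rep e) := by
      intro e
      simp only [z]
      rw [Finset.sum_eq_single e]
      · rw [Pinner _ _ _ _ _ _ (rep_not_inner e), Pinner _ _ _ _ _ _ (rep_not_inner e)]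
        simp
      · intro e' _ hne'
        rw [Pinner _ _ _ _ _ _ (rep_not_inner e), Pinner _ _ _ _ _ _ (rep_not_inner e),
          if_neg (fun h => hne' (repinj h).symm)]
        simp
      · simp
    have hsum : y = ∑ K ∈ KS, X K • bb K := by
      funext e
      rw [hyz, hx, Finset.sum_apply]
      simp only [Pi.smul_apply, smul_eq_mul, bb, β, mul_add, Finset.sum_add_distrib, mul_ite,
        mul_one, mul_zero, Finset.sum_ite_eq]
      rw [if_pos, if_pos]
      · exact Finset.mem_union_right _ (Finset.mem_image_of_mem _ (Finset.mem_univ _))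
      · exact Finset.mem_union_left _ (Finset.mem_image_of_mem _ (Finset.mem_univ _))
    rw [hsum]
    apply Submodule.sum_mem
    intro K hK
    apply Submodule.smul_mem
    by_cases h0 : bb K = 0
    · rw [h0]; exact Submodule.zero_mem _
    · apply Submodule.subset_span
      exact Finset.mem_coe.2 (Finset.mem_image_of_mem _ (Finset.mem_filter.2 ⟨hK, h0⟩))
  have hN : Module.finrank (ZMod 2) (LinearMap.ker D) ≤ N.card := by
    calc _ ≤ Module.finrank (ZMod 2) (Submodule.span (ZMod 2) (N.image bb : Set (ED → ZMod 2))) :=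
          Submodule.finrank_mono hspan
      _ ≤ (N.image bb).card := finrank_span_finset_le_card _
      _ ≤ N.card := Finset.card_image_le
  have hdc : N.card * 3 ≤ Fintype.card ED * 2 := by
    apply Finset.card_mul_le_card_mul (t := Finset.univ) (fun K e => bb K e ≠ 0)
    · intro K hK
      exact cycle_card a b hab inj (bb K) (hcyc K) (Finset.mem_filter.1 hK).2
    · intro e _
      have : Finset.bipartiteBelow (fun K e => bb K e ≠ 0) N e
          ⊆ {q (l (rep e)), q (r (rep e))} := by
        intro K hK
        have hK := (Finset.mem_filter.1 hK).2
        by_contra hcon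
        simp only [Finset.mem_insert, Finset.mem_singleton, not_or] at hcon
        apply hK
        simp only [bb, β]
        rw [if_neg (fun h => hcon.1 h.symm), if_neg (fun h => hcon.2 h.symm), add_zero]
      exact (Finset.card_le_card this).trans Finset.card_le_two
  omega

abbrev GrE : Type := Bool × ℕ × ℕ

def grS (g : GrE) : ℕ × ℕ := (g.2.1, g.2.2)

def grT (g : GrE) : ℕ × ℕ := if g.1 then (g.2.1, g.2.2 + 1) else (g.2.1 + 1, g.2.2)

def grInc (v : ℕ × ℕ) : Finset GrE :=
  {(true, v.1, v.2), (false, v.1, v.2)} ∪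
    ((if v.2 = 0 then ∅ else {(true, v.1, v.2 - 1)}) ∪
     (if v.1 = 0 then ∅ else {(false, v.1 - 1, v.2)}))

def grF (r c : ℕ) : ℕ × ℕ := if r = 0 ∨ c = 0 then (0, 0) else (r, c)

def grL (g : GrE) : ℕ × ℕ := if g.1 then grF g.2.1 (g.2.2 + 1) else grF (g.2.1 + 1) g.2.2

def grR (g : GrE) : ℕ × ℕ := grF (g.2.1 + 1) (g.2.2 + 1)

lemma gr_mem_inc (v : ℕ × ℕ) (g : GrE) : g ∈ grInc v ↔ grS g = v ∨ grT g = v := by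
  obtain ⟨r, c⟩ := v
  obtain ⟨b, i, j⟩ := g
  rcases r with _ | r <;> rcases c with _ | c <;> cases b <;>
    simp [grInc, grS, grT] <;> grind

lemma gr_ne (g : GrE) : grS g ≠ grT g := by
  obtain ⟨b, i, j⟩ := g
  cases b <;> simp [grS, grT]

lemma gr_sum (z : GrE → ZMod 2) (r c : ℕ) : ∑ g ∈ grInc (r, c), z g =
    z (true, r, c) + z (false, r, c) + ((if c = 0 then 0 else z (true, r, c - 1)) +
      (if r = 0 then 0 else z (false, r - 1, c))) := by
  unfold grInc
  rw [Finset.sum_union, Finset.sum_union]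
  · rw [Finset.sum_pair (by simp)]
    congr 1
    congr 1 <;> split_ifs <;> simp
  · rcases r with _ | r <;> rcases c with _ | c <;> simp
  · rcases r with _ | r <;> rcases c with _ | c <;> simp

lemma gr_face (x : ℕ × ℕ → ZMod 2) (v : ℕ × ℕ) :
    ∑ g ∈ grInc v, (x (grL g) + x (grR g)) = 0 := by
  obtain ⟨r, c⟩ := v
  rw [gr_sum (fun g => x (grL g) + x (grR g))]
  rcases r with _ | r <;> rcases c with _ | c <;> simp [grL, grR, grF]
  · generalize x (0, 0) = A
    generalize x (1, 1) = B
    revert A B; decide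
  · generalize x (0, 0) = A
    generalize x (1, c + 1) = B
    generalize x (1, c + 1 + 1) = C
    revert A B C; decide
  · generalize x (0, 0) = A
    generalize x (r + 1, 1) = B
    generalize x (r + 1 + 1, 1) = C
    revert A B C; decide
  · generalize x (r + 1, c + 1) = A
    generalize x (r + 1, c + 1 + 1) = B
    generalize x (r + 1 + 1, c + 1) = C
    generalize x (r + 1 + 1, c + 1 + 1) = D
    revert A B C D; decide

lemma gr_span (z : GrE → ZMod 2) (hz : ∀ v, ∑ g ∈ grInc v, z g = 0) :
    ∃ x : ℕ × ℕ → ZMod 2, ∀ g, z g = x (grL g) + x (grR g) := by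
  let y : ℕ → ℕ → ZMod 2 := fun r c =>
    if c = 0 then 0 else ∑ i ∈ Finset.range r, z (true, i, c - 1)
  have y0 : ∀ r, y r 0 = 0 := fun r => by simp [y]
  have y0' : ∀ c, y 0 c = 0 := fun r => by simp [y]
  have ys : ∀ r c, y (r + 1) (c + 1) = y r (c + 1) + z (true, r, c) := fun r c => by
    simp [y, Finset.sum_range_succ]
  let x : ℕ × ℕ → ZMod 2 := fun p => y p.1 p.2
  have hxF : ∀ r c, x (grF r c) = y r c := by
    intro r c
    unfold grF
    split_ifs with h
    · rcases h with rfl | rfl <;> simp [x, y0, y0']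
    · rfl
  refine ⟨x, ?_⟩
  have hv : ∀ r c, z (false, r, c) = y (r + 1) c + y (r + 1) (c + 1) := by
    intro r
    induction r with
    | zero =>
      intro c
      have h := hz (0, c)
      rw [gr_sum] at h
      rcases c with _ | c
      · rw [ys, y0, y0']
        simp at h
        revert h
        generalize z (true, 0, 0) = A
        generalize z (false, 0, 0) = B
        revert A B; decide
      · rw [ys, ys, y0', y0']
        simp at h
        revert h
        generalize z (true, 0, c) = A
        generalize z (false, 0, c + 1) = B
        generalize z (true, 0, c + 1) = C
        revert A B C; decide
    | succ r ih =>
      intro c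
      have h := hz (r + 1, c)
      rw [gr_sum] at h
      have ih := ih c
      rcases c with _ | c
      · rw [ys, y0]
        rw [y0] at ih
        simp at h ih
        rw [ih] at h
        revert h
        generalize z (true, r + 1, 0) = A
        generalize z (false, r + 1, 0) = B
        generalize y (r + 1) 1 = C
        revert A B C; decide
      · rw [ys (r + 1), ys (r + 1)]
        simp at h ih
        rw [ih] at h
        revert h
        generalize z (true, r + 1, c + 1) = A
        generalize z (false, r + 1, c + 1) = B
        generalize z (true, r + 1, c) = C
        generalize y (r + 1) (c + 1) = C1
        generalize y (r + 1) (c + 1 + 1) = C2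
        revert A B C C1 C2; decide
  rintro ⟨b, r, c⟩
  cases b
  · simp [grL, grR, hxF, hv]
  · simp only [grL, grR, hxF, if_true]
    rw [ys]
    generalize z (true, r, c) = A
    generalize y r (c + 1) = B
    revert A B; decide

def Linked (S : Finset (ℕ × ℕ)) (u v : ℕ × ℕ) : Prop :=
  ∃ P : GrE → ZMod 2, (∀ g, P g ≠ 0 → grS g ∈ S ∧ grT g ∈ S) ∧
    ∀ x, ∑ g ∈ grInc x, P g = (if x = u then 1 else 0) + (if x = v then 1 else 0)

lemma Linked.refl (S : Finset (ℕ × ℕ)) (u : ℕ × ℕ) : Linked S u u :=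
  ⟨0, by simp, fun x => by rw [zmod2_double]; simp⟩

lemma Linked.symm {S : Finset (ℕ × ℕ)} {u v : ℕ × ℕ} (h : Linked S u v) : Linked S v u := by
  obtain ⟨P, h1, h2⟩ := h
  exact ⟨P, h1, fun x => by rw [h2, add_comm]⟩

lemma Linked.trans {S : Finset (ℕ × ℕ)} {u v w : ℕ × ℕ} (h : Linked S u v) (h' : Linked S v w) :
    Linked S u w := by
  obtain ⟨P, h1, h2⟩ := h
  obtain ⟨Q, k1, k2⟩ := h'
  refine ⟨P + Q, ?_, ?_⟩
  · intro g hg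
    by_cases hp : P g = 0
    · exact k1 g (by simpa [hp] using hg)
    · exact h1 g hp
  · intro x
    simp only [Pi.add_apply, Finset.sum_add_distrib, h2, k2]
    generalize (if x = u then (1 : ZMod 2) else 0) = A
    generalize (if x = v then (1 : ZMod 2) else 0) = B
    generalize (if x = w then (1 : ZMod 2) else 0) = C
    revert A B C; decide

lemma Linked.edge {S : Finset (ℕ × ℕ)} (g : GrE) (hs : grS g ∈ S) (ht : grT g ∈ S) :
    Linked S (grS g) (grT g) := by
  refine ⟨fun g' => if g' = g then 1 else 0, ?_, ?_⟩
  · intro g' hg'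
    have : g' = g := by by_contra h; simp [h] at hg'
    subst this; exact ⟨hs, ht⟩
  · intro x
    rw [Finset.sum_ite_eq']
    have := gr_ne g
    have hm := gr_mem_inc x g
    by_cases c1 : x = grS g
    · have c2 : x ≠ grT g := fun h => this (c1.symm.trans h)
      rw [if_pos (hm.2 (Or.inl c1.symm)), if_pos c1, if_neg c2, add_zero]
    · by_cases c2 : x = grT g
      · rw [if_pos (hm.2 (Or.inr c2.symm)), if_neg c1, if_pos c2, zero_add]
      · rw [if_neg, if_neg c1, if_neg c2, zero_add]
        rw [hm]; rintro (h | h)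
        · exact c1 h.symm
        · exact c2 h.symm

/-- Placement of the vertices of `G(δ,k)` in the quadrant grid. -/
def phi (δ k : ℕ) : GDKVert δ k → Finset (ℕ × ℕ)
  | Sum.inl p => if (p : ℕ) = 0 then
      (Finset.range ((δ - 1) * (k * δ) + 2)).image (fun i => (i, 0)) else {(0, (p : ℕ))}
  | Sum.inr ij => {((ij.1 : ℕ) + 1, (ij.2 : ℕ) + 1)}

/-- The removed vertices of the top path. -/
def special (δ k : ℕ) : GDKVert δ k → Prop
  | Sum.inl p => (p : ℕ) ≠ 0 ∧ k ∣ (p : ℕ)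
  | Sum.inr _ => False

lemma phi_nonempty (δ k : ℕ) (x : GDKVert δ k) : (phi δ k x).Nonempty := by
  rcases x with p | ij
  · simp only [phi]
    split_ifs <;> simp
  · simp [phi]

lemma phi_disj (δ k : ℕ) (x y : GDKVert δ k) (v : ℕ × ℕ) (hx : v ∈ phi δ k x)
    (hy : v ∈ phi δ k y) : x = y := by
  obtain ⟨a, b⟩ := v
  rcases x with p | ⟨i, j⟩ <;> rcases y with p' | ⟨i', j'⟩ <;> simp only [phi] at hx hy
  · congr 1
    apply Fin.ext
    split_ifs at hx hy <;> simp at hx hy <;> omega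
  · split_ifs at hx <;> simp at hx hy <;> omega
  · split_ifs at hy <;> simp at hx hy <;> omega
  · simp at hx hy
    congr 2 <;> apply Fin.ext <;> omega

lemma phi_linked (δ k : ℕ) (x : GDKVert δ k) (S : Finset (ℕ × ℕ)) (hS : phi δ k x ⊆ S)
    (u v : ℕ × ℕ) (hu : u ∈ phi δ k x) (hv : v ∈ phi δ k x) : Linked S u v := by
  rcases x with p | ij
  · simp only [phi] at hu hv hS
    split_ifs at hu hv hS with h
    · have key : ∀ i, i < (δ - 1) * (k * δ) + 2 → Linked S (0, 0) (i, 0) := by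
        intro i
        induction i with
        | zero => intro _; exact Linked.refl _ _
        | succ i ih =>
          intro hi
          refine (ih (by omega)).trans ?_
          have := Linked.edge (S := S) (false, i, 0)
            (hS (by simp [grS]; omega)) (hS (by simp [grT]; omega))
          simpa [grS, grT] using this
      simp only [Finset.mem_image, Finset.mem_range] at hu hv
      obtain ⟨i, hi, rfl⟩ := hu
      obtain ⟨j, hj, rfl⟩ := hv
      exact (key i hi).symm.trans (key j hj)
    · rw [Finset.mem_singleton] at hu hv
      rw [hu, hv]; exact Linked.refl _ _
  · simp only [phi, Finset.mem_singleton] at hu hv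
    rw [hu, hv]; exact Linked.refl _ _

lemma phi_top_mem (δ k : ℕ) (p : Fin ((δ - 1) * k + 1)) :
    (0, (p : ℕ)) ∈ phi δ k (Sum.inl p) := by
  simp only [phi]
  split_ifs with h
  · simp [h]
  · simp

lemma phi_adj (δ k : ℕ) (hδ : 3 ≤ δ) (hk : 2 ≤ k) (x y : GDKVert δ k) (h : (GDK δ k).Adj x y)
    (hx : ¬ special δ k x) (hy : ¬ special δ k y) :
    ∃ g, (grS g ∈ phi δ k x ∧ grT g ∈ phi δ k y) ∨ (grS g ∈ phi δ k y ∧ grT g ∈ phi δ k x) := by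
  have hvp : ∀ (i j : Fin ((δ - 1) * (k * δ) + 1)) (p : Fin ((δ - 1) * k + 1)),
      ¬ special δ k (Sum.inl p) → (k * δ) ∣ (j : ℕ) → (p : ℕ) * (k * δ) = (j : ℕ) * k →
      grS (true, (i : ℕ) + 1, 0) ∈ phi δ k (Sum.inl p) ∧
      grT (true, (i : ℕ) + 1, 0) ∈ phi δ k (Sum.inr (i, j)) := by
    intro i j p hp hj he
    have hpos : 0 < k * δ := by positivity
    obtain ⟨m, hm⟩ := hj
    have h1 : (p : ℕ) = m * k := by
      apply Nat.eq_of_mul_eq_mul_right hpos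
      rw [he, hm]; ring
    have h2 : (p : ℕ) = 0 := by
      by_contra h0
      exact hp ⟨h0, h1 ▸ Dvd.intro_left m rfl⟩
    have h3 : (j : ℕ) = 0 := by
      rw [h2, zero_mul] at he
      rcases Nat.mul_eq_zero.1 he.symm with h | h
      · exact h
      · omega
    have := i.2
    constructor
    · simp [phi, h2, grS]; omega
    · simp [phi, h3, grT]
  rw [GDK, SimpleGraph.fromRel_adj] at h
  rcases x with p | ⟨i, j⟩ <;> rcases y with p' | ⟨i', j'⟩ <;> simp only [or_false, false_or] at h
  · rcases h.2 with h | h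
    · refine ⟨(true, 0, (p : ℕ)), Or.inl ⟨phi_top_mem _ _ _, ?_⟩⟩
      have := phi_top_mem δ k p'
      rw [h] at this
      exact this
    · refine ⟨(true, 0, (p' : ℕ)), Or.inr ⟨phi_top_mem _ _ _, ?_⟩⟩
      have := phi_top_mem δ k p
      rw [h] at this
      exact this
  · exact ⟨_, Or.inl (hvp i' j' p hx h.2.2.1 h.2.2.2)⟩
  · exact ⟨_, Or.inr (hvp i j p' hy h.2.2.1 h.2.2.2)⟩
  · rcases h.2 with (h | h) | (h | h)
    · exact ⟨(true, i + 1, j + 1), Or.inl (by simp [grS, grT, phi, h.1, h.2])⟩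
    · exact ⟨(false, i + 1, j + 1), Or.inl (by simp [grS, grT, phi, h.1, h.2.2])⟩
    · exact ⟨(true, i' + 1, j' + 1), Or.inr (by simp [grS, grT, phi, h.1, h.2])⟩
    · exact ⟨(false, i' + 1, j' + 1), Or.inr (by simp [grS, grT, phi, h.1, h.2.2])⟩

open Classical in
lemma planar_part (δ k : ℕ) (hδ : 3 ≤ δ) (hk : 2 ≤ k) {W : Type} [Fintype W] (H : SimpleGraph W)
    (f : W → Set (GDKVert δ k)) (hne : ∀ w, (f w).Nonempty)
    (hconn : ∀ w, ((GDK δ k).induce (f w)).Connected)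
    (hdisj : Pairwise fun w₁ w₂ => Disjoint (f w₁) (f w₂))
    (hadj : ∀ w₁ w₂, H.Adj w₁ w₂ → ∃ u ∈ f w₁, ∃ v ∈ f w₂, (GDK δ k).Adj u v)
    (A : Finset W) (hA : ∀ w, w ∉ A → ∀ x ∈ f w, ¬ special δ k x) :
    (H.edgeFinset.filter (fun e => ∀ w ∈ e, w ∉ A)).card ≤ 3 * (Fintype.card W - A.card) := by
  let W' := {w : W // w ∉ A}
  let ED := {e : Sym2 W // e ∈ H.edgeFinset.filter (fun e => ∀ w ∈ e, w ∉ A)}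
  have hW' : Fintype.card W' = Fintype.card W - A.card := by
    rw [Fintype.card_subtype_compl]; simp
  have hED : Fintype.card ED = (H.edgeFinset.filter (fun e => ∀ w ∈ e, w ∉ A)).card :=
    Fintype.card_coe _
  rw [← hW', ← hED]
  let F : W' → Finset (ℕ × ℕ) := fun w =>
    (Finset.univ.filter (fun x => x ∈ f w.1)).biUnion (phi δ k)
  have memF : ∀ w v, v ∈ F w ↔ ∃ x ∈ f w.1, v ∈ phi δ k x := by
    intro w v
    simp only [F, Finset.mem_biUnion, Finset.mem_filter, Finset.mem_univ, true_and]
  have hsub : ∀ (w : W') x, x ∈ f w.1 → phi δ k x ⊆ F w := fun w x hx v hv =>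
    (memF w v).2 ⟨x, hx, hv⟩
  have hex : ∀ e : ED, ∃ (a b : W') (g : GrE), e.1 = s(a.1, b.1) ∧ a ≠ b ∧
      grS g ∈ F a ∧ grT g ∈ F b := by
    rintro ⟨e, he⟩
    induction e using Sym2.ind with
    | _ u v =>
      rw [Finset.mem_filter, SimpleGraph.mem_edgeFinset, SimpleGraph.mem_edgeSet] at he
      have hu : u ∉ A := he.2 u (Sym2.mem_mk_left u v)
      have hv : v ∉ A := he.2 v (Sym2.mem_mk_right u v)
      obtain ⟨x, hx, y, hy, hxy⟩ := hadj u v he.1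
      obtain ⟨g, hg | hg⟩ := phi_adj δ k hδ hk x y hxy (hA u hu x hx) (hA v hv y hy)
      · exact ⟨⟨u, hu⟩, ⟨v, hv⟩, g, rfl, fun h => he.1.ne (congrArg Subtype.val h),
          hsub ⟨u, hu⟩ x hx hg.1, hsub ⟨v, hv⟩ y hy hg.2⟩
      · exact ⟨⟨v, hv⟩, ⟨u, hu⟩, g, Sym2.eq_swap, fun h => he.1.ne (congrArg Subtype.val h).symm,
          hsub ⟨v, hv⟩ y hy hg.1, hsub ⟨u, hu⟩ x hx hg.2⟩
  choose a b rep h1 h2 h3 h4 using hex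
  have hlink : ∀ w : W', ∀ x y : (f w.1), ((GDK δ k).induce (f w.1)).Reachable x y →
      ∀ u ∈ phi δ k x.1, ∀ v ∈ phi δ k y.1, Linked (F w) u v := by
    intro w x y hr
    obtain ⟨p⟩ := hr
    induction p with
    | nil => intro u hu v hv; exact phi_linked δ k _ _ (hsub w _ (Subtype.property _)) u v hu hv
    | @cons x x' y hxx p ih =>
      intro u hu v hv
      have hadj' : (GDK δ k).Adj x.1 x'.1 := hxx
      obtain ⟨g, hg | hg⟩ := phi_adj δ k hδ hk _ _ hadj' (hA w.1 w.2 _ x.2) (hA w.1 w.2 _ x'.2)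
      · exact ((phi_linked δ k _ _ (hsub w _ x.2) u _ hu hg.1).trans
          (Linked.edge g (hsub w _ x.2 hg.1) (hsub w _ x'.2 hg.2))).trans (ih _ hg.2 v hv)
      · exact ((phi_linked δ k _ _ (hsub w _ x.2) u _ hu hg.2).trans
          (Linked.edge g (hsub w _ x'.2 hg.1) (hsub w _ x.2 hg.2)).symm).trans (ih _ hg.1 v hv)
  refine maclane_count grS grT grInc gr_mem_inc gr_ne grL grR gr_face gr_span F ?_ ?_ ?_ a b h2 ?_
    rep h3 h4
  · intro w
    obtain ⟨x, hx⟩ := hne w.1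
    exact (phi_nonempty δ k x).mono (hsub w x hx)
  · intro w w' v hv hv'
    obtain ⟨x, hx, hxv⟩ := (memF _ _).1 hv
    obtain ⟨y, hy, hyv⟩ := (memF _ _).1 hv'
    have := phi_disj δ k x y v hxv hyv
    subst this
    by_contra hcon
    exact Set.disjoint_left.1 (hdisj (fun h => hcon (Subtype.ext h))) hx hy
  · intro w u hu v hv
    obtain ⟨x, hx, hxv⟩ := (memF _ _).1 hu
    obtain ⟨y, hy, hyv⟩ := (memF _ _).1 hv
    obtain ⟨P, hP, hP'⟩ := hlink w ⟨x, hx⟩ ⟨y, hy⟩ ((hconn w.1).preconnected _ _) u hxv v hyv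
    refine ⟨P, hP, fun z => ?_⟩
    rw [hP']
    congr
  · intro e e' h
    apply Subtype.ext
    rw [h1, h1]
    have := congrArg (Sym2.map Subtype.val) h
    simpa using this

open Classical in
lemma minor_count (δ k : ℕ) (hδ : 3 ≤ δ) (hk : 2 ≤ k) {W : Type} [Fintype W] (H : SimpleGraph W)
    (hH : IsMinor (GDK δ k) H) (hn : 0 < Fintype.card W) :
    H.edgeFinset.card + 1 ≤ (δ + 2) * Fintype.card W ∧
      Fintype.card W ≤ Fintype.card (GDKVert δ k) := by
  obtain ⟨f, hne, hconn, hdisj, hadj⟩ := hH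
  have hdis : ∀ w w' x, x ∈ f w → x ∈ f w' → w = w' := by
    intro w w' x hx hx'
    by_contra h
    exact Set.disjoint_left.1 (hdisj h) hx hx'
  constructor
  · let A : Finset W := Finset.univ.filter (fun w => ∃ x ∈ f w, special δ k x)
    have hA : ∀ w, w ∉ A → ∀ x ∈ f w, ¬ special δ k x := by
      intro w hw x hx hsp
      exact hw (Finset.mem_filter.2 ⟨Finset.mem_univ _, x, hx, hsp⟩)
    have hmain := planar_part δ k hδ hk H f hne hconn hdisj hadj A hA
    have hAc : A.card ≤ δ - 1 := by
      have hex : ∀ w : W, ∃ m : ℕ, w ∈ A → m ∈ Finset.Icc 1 (δ - 1) ∧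
          ∃ p : Fin ((δ - 1) * k + 1), (p : ℕ) = k * m ∧ Sum.inl p ∈ f w := by
        intro w
        by_cases hw : w ∈ A
        · obtain ⟨x, hx, hsp⟩ := (Finset.mem_filter.1 hw).2
          rcases x with p | ij
          · obtain ⟨h0, m, hm⟩ := hsp
            refine ⟨m, fun _ => ⟨?_, p, hm, hx⟩⟩
            have hp := p.2
            rw [Finset.mem_Icc]
            constructor
            · rcases m with _ | m
              · exact absurd hm h0
              · omega
            · rw [hm, mul_comm (δ - 1)] at hp
              exact Nat.le_of_mul_le_mul_left (Nat.lt_succ_iff.1 hp) (by omega)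
          · exact absurd hsp id
        · exact ⟨0, fun h => absurd h hw⟩
      choose m hm using hex
      have : A.card ≤ (Finset.Icc 1 (δ - 1)).card := by
        apply Finset.card_le_card_of_injOn m
        · intro w hw; exact (hm w hw).1
        · intro w hw w' hw' h
          obtain ⟨p, hp, hpf⟩ := (hm w hw).2
          obtain ⟨p', hp', hpf'⟩ := (hm w' hw').2
          have : p = p' := Fin.ext (by rw [hp, hp', h])
          subst this
          exact hdis _ _ _ hpf hpf'
      simpa using this
    have hcover : H.edgeFinset ⊆ H.edgeFinset.filter (fun e => ∀ w ∈ e, w ∉ A) ∪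
        A.biUnion (fun w => H.incidenceFinset w) := by
      intro e he
      by_cases h : ∀ w ∈ e, w ∉ A
      · exact Finset.mem_union_left _ (Finset.mem_filter.2 ⟨he, h⟩)
      · push Not at h
        obtain ⟨w, hw, hwA⟩ := h
        refine Finset.mem_union_right _ (Finset.mem_biUnion.2 ⟨w, hwA, ?_⟩)
        rw [SimpleGraph.mem_incidenceFinset]
        exact ⟨SimpleGraph.mem_edgeFinset.1 he, hw⟩
    have hinc : (A.biUnion (fun w => H.incidenceFinset w)).card ≤ A.card * Fintype.card W := by
      apply Finset.card_biUnion_le_card_mul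
      intro w _
      rw [SimpleGraph.card_incidenceFinset_eq_degree]
      exact (H.degree_lt_card_verts w).le
    have h1 := (Finset.card_le_card hcover).trans (Finset.card_union_le _ _)
    have hAn : A.card ≤ Fintype.card W := Finset.card_le_univ _
    generalize Fintype.card W = n at *
    generalize A.card = α at *
    have h2 : H.edgeFinset.card ≤ 3 * (n - α) + α * n := h1.trans (Nat.add_le_add hmain hinc)
    rcases Nat.eq_zero_or_pos α with h0 | h0
    · subst h0
      have : 5 * n ≤ (δ + 2) * n := Nat.mul_le_mul_right _ (by omega)
      omega
    · have : (α + 3) * n ≤ (δ + 2) * n := Nat.mul_le_mul_right _ (by omega)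
      rw [add_mul] at this
      omega
  · choose x hx using hne
    apply Fintype.card_le_of_injective x
    intro w w₂ h
    exact hdis _ _ _ (hx w) (h ▸ hx w₂)

/-- **Claim.** For `δ ≥ 3` and `k ≥ 2`, every minor of `G(δ,k)` has edge density strictly
less than `δ + 2`; that is, the minor density satisfies `δ(G(δ,k)) < δ + 2`. -/
theorem gdk_minor_density_lt (δ k : ℕ) (hδ : 3 ≤ δ) (hk : 2 ≤ k) :
    (∀ (W : Type) (_ : Fintype W) (H : SimpleGraph W), IsMinor (GDK δ k) H →
      (Nat.card H.edgeSet : ℝ) / (Nat.card W : ℝ) < (δ : ℝ) + 2) ∧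
    minorDensity (GDK δ k) < (δ : ℝ) + 2 := by
  have hB : (0 : ℝ) < Fintype.card (GDKVert δ k) := by
    have : 0 < Fintype.card (GDKVert δ k) := Fintype.card_pos_iff.2 ⟨Sum.inl 0⟩
    exact_mod_cast this
  have hB1 : (1 : ℝ) / Fintype.card (GDKVert δ k) ≤ 1 := by
    rw [div_le_one hB]
    have : 0 < Fintype.card (GDKVert δ k) := Fintype.card_pos_iff.2 ⟨Sum.inl 0⟩
    exact_mod_cast this
  have hBp : (0 : ℝ) < 1 / Fintype.card (GDKVert δ k) := by positivity
  have key : ∀ (W : Type) (_ : Fintype W) (H : SimpleGraph W), IsMinor (GDK δ k) H →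
      (Nat.card H.edgeSet : ℝ) / (Nat.card W : ℝ) ≤
        (δ : ℝ) + 2 - 1 / Fintype.card (GDKVert δ k) := by
    intro W _ H hH
    classical
    rcases Nat.eq_zero_or_pos (Fintype.card W) with h0 | hn
    · rw [Nat.card_eq_fintype_card (α := W), h0]
      simp only [Nat.cast_zero, div_zero]
      have : (0 : ℝ) ≤ δ := Nat.cast_nonneg _
      linarith
    · obtain ⟨h1, h2⟩ := minor_count δ k hδ hk H hH hn
      have hE : Nat.card H.edgeSet = H.edgeFinset.card := by
        rw [Nat.card_eq_fintype_card, SimpleGraph.edgeFinset_card]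
      rw [hE, Nat.card_eq_fintype_card]
      have hn' : (0 : ℝ) < Fintype.card W := by exact_mod_cast hn
      have h1' : (H.edgeFinset.card : ℝ) + 1 ≤ (δ + 2) * Fintype.card W := by
        have h1 : H.edgeFinset.card + 1 ≤ (δ + 2) * Fintype.card W := by convert h1
        exact_mod_cast h1
      have h2' : (1 : ℝ) / Fintype.card (GDKVert δ k) ≤ 1 / Fintype.card W :=
        one_div_le_one_div_of_le hn' (by exact_mod_cast h2)
      have h3 : (H.edgeFinset.card : ℝ) / Fintype.card W ≤ δ + 2 - 1 / Fintype.card W := by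
        rw [le_sub_iff_add_le, ← add_div, div_le_iff₀ hn']
        exact h1'
      linarith
  refine ⟨fun W i H hH => (key W i H hH).trans_lt (by linarith), ?_⟩
  refine lt_of_le_of_lt (Real.sSup_le ?_ ?_) (sub_lt_self ((δ : ℝ) + 2) hBp)
  · rintro d ⟨W, i, H, hH, rfl⟩
    exact key W i H hH
  · have : (0 : ℝ) ≤ δ := Nat.cast_nonneg _
    linarith
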